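/- Let Ω be a countably infinite set, f : Ω → ℝ^d, and B ∈ ℝ^d. Define Λ_B = {ω ∈ Ω : f(ω) = B} and suppose Λ_B is finite and non-empty. Suppose there exists b ∈ ℝ^d such that Z := Σ_{ω∈Ω} e^{−⟨b, f(ω)⟩} < ∞ and, setting μ(ω) := (1/Z) e^{−⟨b, f(ω)⟩}, one has E_μ f = B. Then H(μ) ≥ H(ν) for every probability distribution ν on Ω with E_ν f = B, and |Λ_B| = e^{H(μ)} · μ(Λ_B). -/

import Mathlib

open scoped Classical

/-- Shannon entropy of a probability mass function on a countable type. -/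
noncomputable def shannonEntropy {Ω : Type*} (μ : Ω → ℝ) : ℝ :=
  -∑' ω, μ ω * Real.log (μ ω)

/-- Pointwise form of the Gibbs inequality. -/
theorem mul_log_add_sub_le_mul_log {x y : ℝ} (hx : 0 ≤ x) (hy : 0 < y) :
    x * Real.log y + (x - y) ≤ x * Real.log x := by
  rcases hx.eq_or_lt with rfl | hx
  · simpa using hy.le
  · have h := Real.log_le_sub_one_of_pos (div_pos hy hx)
    rw [Real.log_div hy.ne' hx.ne'] at h
    have h' := mul_le_mul_of_nonneg_left h hx.le
    have e : x * (y / x - 1) = y - x := by field_simp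
    rw [e] at h'
    linarith

/-- The expected log-density of an exponential-family distribution depends only on the moments. -/
theorem hasSum_mul_neg_linear_sub {Ω ι : Type*} [Fintype ι] {f : Ω → ι → ℝ} {B : ι → ℝ}
    (b : ι → ℝ) (c : ℝ) {p : Ω → ℝ} (hp : HasSum p 1)
    (hB : ∀ i, HasSum (fun ω => p ω * f ω i) (B i)) :
    HasSum (fun ω => p ω * (-(∑ i, b i * f ω i) - c)) (-((∑ i, b i * B i) + c)) := by
  have h := ((hasSum_sum fun i (_ : i ∈ Finset.univ) => (hB i).mul_left (b i)).add
    (hp.mul_right c)).neg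
  rw [one_mul] at h
  refine (funext fun ω => ?_ : (fun ω => p ω * (-(∑ i, b i * f ω i) - c)) = _) ▸ h
  have e : ∑ i, b i * (p ω * f ω i) = p ω * ∑ i, b i * f ω i := by
    rw [Finset.mul_sum]
    exact Finset.sum_congr rfl fun i _ => by ring
  rw [e]
  ring

theorem stmt_3 {Ω : Type*} [Countable Ω] [Infinite Ω] {d : ℕ}
    (f : Ω → Fin d → ℝ) (B : Fin d → ℝ)
    (hfin : {ω | f ω = B}.Finite) (hne : ∃ ω, f ω = B)
    (b : Fin d → ℝ)
    (hsum : Summable (fun ω => Real.exp (-∑ i, b i * f ω i)))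
    (Z : ℝ) (hZ : Z = ∑' ω, Real.exp (-∑ i, b i * f ω i))
    (μ : Ω → ℝ) (hμ : ∀ ω, μ ω = Real.exp (-∑ i, b i * f ω i) / Z)
    (hmom : ∀ i, Summable (fun ω => μ ω * f ω i))
    (hμB : ∀ i, ∑' ω, μ ω * f ω i = B i) :
    (∀ ν : Ω → ℝ, (∀ ω, 0 ≤ ν ω) → (∑' ω, ν ω) = 1 →
      (∀ i, Summable (fun ω => ν ω * f ω i)) →
      (∀ i, ∑' ω, ν ω * f ω i = B i) → shannonEntropy ν ≤ shannonEntropy μ) ∧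
    (Nat.card {ω // f ω = B} : ℝ) =
      Real.exp (shannonEntropy μ) * ∑' ω : {ω // f ω = B}, μ ω := by
  obtain ⟨ω₀, -⟩ := hne
  have hZpos : 0 < Z := hZ ▸ hsum.tsum_pos (fun _ => (Real.exp_pos _).le) ω₀ (Real.exp_pos _)
  have hμpos : ∀ ω, 0 < μ ω := fun ω => hμ ω ▸ div_pos (Real.exp_pos _) hZpos
  have hμsum : HasSum μ 1 := by
    have h := hsum.hasSum.div_const Z
    rw [← hZ, div_self hZpos.ne'] at h
    rwa [funext hμ]
  have hlog : ∀ ω, Real.log (μ ω) = -(∑ i, b i * f ω i) - Real.log Z := fun ω => by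
    rw [hμ, Real.log_div (Real.exp_pos _).ne' hZpos.ne', Real.log_exp]
  have hcross : ∀ p : Ω → ℝ, HasSum p 1 → (∀ i, HasSum (fun ω => p ω * f ω i) (B i)) →
      HasSum (fun ω => p ω * Real.log (μ ω)) (-((∑ i, b i * B i) + Real.log Z)) := by
    intro p hp hB
    simp only [hlog]
    exact hasSum_mul_neg_linear_sub b (Real.log Z) hp hB
  have hentropy : shannonEntropy μ = (∑ i, b i * B i) + Real.log Z := by
    rw [shannonEntropy, (hcross μ hμsum fun i => hμB i ▸ (hmom i).hasSum).tsum_eq, neg_neg]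
  refine ⟨fun ν hν hν1 hνm hνB => ?_, ?_⟩
  · have hνsum : HasSum ν 1 := by
      have h : Summable ν := by
        by_contra h
        simp [tsum_eq_zero_of_not_summable h] at hν1
      exact hν1 ▸ h.hasSum
    have hlower := (hcross ν hνsum fun i => hνB i ▸ (hνm i).hasSum).add (hνsum.sub hμsum)
    have hgibbs := fun ω => mul_log_add_sub_le_mul_log (hν ω) (hμpos ω)
    have hνlog : ∀ ω, ν ω * Real.log (ν ω) ≤ 0 := fun ω =>
      mul_nonpos_of_nonneg_of_nonpos (hν ω)
        (Real.log_nonpos (hν ω) (le_hasSum hνsum ω fun ω' _ => hν ω'))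
    have hs : Summable fun ω => ν ω * Real.log (ν ω) :=
      summable_neg_iff.mp <| Summable.of_nonneg_of_le (fun ω => neg_nonneg.mpr (hνlog ω))
        (fun ω => neg_le_neg (hgibbs ω)) hlower.summable.neg
    have h := hasSum_le hgibbs hlower hs.hasSum
    rw [hentropy, shannonEntropy]
    linarith
  · have hconst : ∀ ω : {ω // f ω = B}, μ ω = Real.exp (-∑ i, b i * B i) / Z := fun ω => by
      rw [hμ, ω.2]
    have : Finite {ω // f ω = B} := hfin
    rw [tsum_congr hconst, tsum_const, nsmul_eq_mul, hentropy, Real.exp_add, Real.exp_log hZpos,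
      Real.exp_neg]
    field_simp
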